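/- The free group on two generators is not unitarizable: there exists a uniformly bounded representation of the free group F₂ on a complex Hilbert space that is not unitarizable. -/

import Mathlib

/-- A representation of a group `G` on a complex inner product space `E`
(a homomorphism into the group of invertible continuous linear operators on `E`)
is *uniformly bounded* if the operator norms `‖π g‖` are bounded. -/
def UniformlyBoundedRep {G : Type*} [Group G] {E : Type*} [NormedAddCommGroup E]
    [InnerProductSpace ℂ E] (π : G →* (E ≃L[ℂ] E)) : Prop :=
  ∃ C : ℝ, ∀ g : G, ‖((π g : E ≃L[ℂ] E) : E →L[ℂ] E)‖ ≤ C

/-- A representation `π` is *unitarizable* if there is a continuous linear automorphism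
`S` of `E` such that `g ↦ S⁻¹ π(g) S` is a unitary operator for every `g` (being an
invertible continuous linear map, it is unitary iff it is an isometry). -/
def IsUnitarizableRep {G : Type*} [Group G] {E : Type*} [NormedAddCommGroup E]
    [InnerProductSpace ℂ E] (π : G →* (E ≃L[ℂ] E)) : Prop :=
  ∃ S : E ≃L[ℂ] E, ∀ g : G, ∀ v : E, ‖S.symm (π g (S v))‖ = ‖v‖

/-- A group `G` is *unitarizable* if every uniformly bounded representation of `G`
on every complex Hilbert space is unitarizable. -/
def Unitarizable (G : Type*) [Group G] : Prop :=
  ∀ (E : Type) [NormedAddCommGroup E] [InnerProductSpace ℂ E] [CompleteSpace E]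
    (π : G →* (E ≃L[ℂ] E)), UniformlyBoundedRep π → IsUnitarizableRep π

/-!
Let the free group `F` act on `V = F / ⟨t⟩`, the vertices of the tree obtained from the Cayley tree
of `F` by collapsing the `t`-edges, and let `u` be the induced unitary representation on
`H = ℓ²(V)`, with `ξ` the basis vector of the base vertex. The invertible dual numbers `a + b ε`
over `B(H)` act on `H ⊕ H` by the matrices `[[a, b], [0, a]]`, and since `F` is free,
`s ↦ (1 + (ξ ⊗ (u s ξ)* - (u s ξ) ⊗ ξ*) ε) u s` on the generators extends to a representation of
`F` on `H ⊕ H`.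

Along a reduced word the off-diagonal entry telescopes to a sum of such rank-two operators over the
edges of a path in the tree. The path never returns to a vertex it has left, so this is a difference
of two partial isometries, and the representation is uniformly bounded. If it were unitarizable,
the orthogonal projection onto `H ⊕ 0` for an invariant inner product would commute with it, and
the off-diagonal entry would be `u T - T u` for a bounded `T`. As the entry vanishes at `t`, the
operator `T` commutes with `u t`, hence `T ξ` and `T* ξ` are fixed by `u t` and orthogonal to
`u a ξ` and `u a⁻¹ ξ`, whose `u t`-orbits are infinite orthonormal families. Pairing the formula for
the entry at `a` with `ξ` then gives `1 = 0`.
-/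

open InnerProductSpace Submodule
open scoped DualNumber

universe u

section OrthonormalFamilies

variable {𝕜 E F ι : Type*} [RCLike 𝕜] [NormedAddCommGroup E] [InnerProductSpace 𝕜 E]
  [NormedAddCommGroup F] [InnerProductSpace 𝕜 F]

theorem norm_sum_rankOne_le_one {v : ι → E} {w : ι → F} (hv : Orthonormal 𝕜 v)
    (hw : Orthonormal 𝕜 w) (s : Finset ι) : ‖∑ i ∈ s, rankOne 𝕜 (v i) (w i)‖ ≤ 1 := by
  refine ContinuousLinearMap.opNorm_le_bound _ zero_le_one fun x => ?_
  rw [one_mul]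
  refine le_of_sq_le_sq ?_ (norm_nonneg x)
  calc ‖(∑ i ∈ s, rankOne 𝕜 (v i) (w i)) x‖ ^ 2
      = ‖∑ i ∈ s, inner 𝕜 (w i) x • v i‖ ^ 2 := by simp
    _ = ∑ i ∈ s, ‖inner 𝕜 (w i) x‖ ^ 2 :=
        hv.orthogonalFamily.norm_sum (fun i => inner 𝕜 (w i) x) s
    _ ≤ ‖x‖ ^ 2 := hw.sum_inner_products_le x

theorem inner_eq_zero_of_orthonormal_orbit [CompleteSpace E] {U : unitary (E →L[𝕜] E)} {x y : E}
    (hx : Orthonormal 𝕜 fun n : ℕ => ((U ^ n : unitary (E →L[𝕜] E)) : E →L[𝕜] E) x)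
    (hy : (U : E →L[𝕜] E) y = y) : inner 𝕜 x y = 0 := by
  have hpow (n : ℕ) : ((U ^ n : unitary (E →L[𝕜] E)) : E →L[𝕜] E) y = y := by
    induction n with
    | zero => simp
    | succ n ih => rw [pow_succ', Submonoid.coe_mul, mul_apply_eq_comp, ih, hy]
  have hconst (n : ℕ) :
      inner 𝕜 (((U ^ n : unitary (E →L[𝕜] E)) : E →L[𝕜] E) x) y = inner 𝕜 x y := by
    conv_lhs => rw [← hpow n, Unitary.inner_map_map]
  have hsum := hx.inner_products_summable (x := y)
  simpa only [hconst, summable_const_iff, sq_eq_zero_iff, norm_eq_zero] using hsum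

theorem unitary_adjoint_apply_eq_of_commute [CompleteSpace E] {U : unitary (E →L[𝕜] E)}
    {T : E →L[𝕜] E} (hT : Commute (U : E →L[𝕜] E) T) {x : E} (hx : (U : E →L[𝕜] E) x = x) :
    (U : E →L[𝕜] E) (ContinuousLinearMap.adjoint T x) = ContinuousLinearMap.adjoint T x := by
  have hU : Commute (U : E →L[𝕜] E) (star T) := by
    have : Commute (star (U : E →L[𝕜] E)) (star T) := hT.star_star
    exact Commute.units_inv_left_iff (u := Unitary.toUnits U) |>.1 this
  rw [← ContinuousLinearMap.star_eq_adjoint, ← mul_apply_eq_comp, hU, mul_apply_eq_comp, hx]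

end OrthonormalFamilies

section SkewRankOne

variable {𝕜 H : Type*} [RCLike 𝕜] [NormedAddCommGroup H] [InnerProductSpace 𝕜 H]

variable (𝕜) in
/-- The skew-adjoint operator `x ⊗ y* - y ⊗ x*`. -/
noncomputable def skewRankOne (x y : H) : H →L[𝕜] H :=
  rankOne 𝕜 x y - rankOne 𝕜 y x

@[simp]
theorem skewRankOne_self (x : H) : skewRankOne 𝕜 x x = 0 :=
  sub_self _

theorem neg_skewRankOne (x y : H) : -skewRankOne 𝕜 x y = skewRankOne 𝕜 y x :=
  neg_sub _ _

theorem skewRankOne_apply (x y z : H) :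
    skewRankOne 𝕜 x y z = inner 𝕜 y z • x - inner 𝕜 x z • y := by
  simp [skewRankOne]

theorem mul_skewRankOne [CompleteSpace H] (U : unitary (H →L[𝕜] H)) (x y : H) :
    (U : H →L[𝕜] H) * skewRankOne 𝕜 x y =
      skewRankOne 𝕜 ((U : H →L[𝕜] H) x) ((U : H →L[𝕜] H) y) * (U : H →L[𝕜] H) := by
  ext z
  simp [skewRankOne_apply, Unitary.inner_map_map]

theorem norm_sum_skewRankOne_le_two {V : Type*} {e : V → H} (he : Orthonormal 𝕜 e) {x : ℕ → V}
    (hx : ∀ v, (x ⁻¹' {v}).OrdConnected) (n : ℕ) :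
    ‖∑ i ∈ Finset.range n, skewRankOne 𝕜 (e (x i)) (e (x (i + 1)))‖ ≤ 2 := by
  classical
  let M : Set ℕ := {i | x i ≠ x (i + 1)}
  have hsource : Function.Injective fun i : M => x i :=
    Function.Injective.of_lt_imp_ne fun i j hij h => i.2 <|
      ((hx (x i)).out rfl h.symm ⟨Nat.le_succ i, hij⟩).symm
  have htarget : Function.Injective fun i : M => x (i + 1) :=
    Function.Injective.of_lt_imp_ne fun i j hij h => j.2 <|
      ((hx (x (j + 1))).out h rfl ⟨hij, Nat.le_succ j⟩)
  have hs := he.comp _ hsource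
  have ht := he.comp _ htarget
  let s : Finset M := (Finset.range n).subtype (· ∈ M)
  calc ‖∑ i ∈ Finset.range n, skewRankOne 𝕜 (e (x i)) (e (x (i + 1)))‖
      = ‖∑ i ∈ s, skewRankOne 𝕜 (e (x i)) (e (x (i + 1)))‖ := by
        rw [Finset.sum_subtype_eq_sum_filter
          (f := fun i => skewRankOne 𝕜 (e (x i)) (e (x (i + 1)))), Finset.sum_filter_of_ne]
        intro i _ hi hM
        exact hi (by rw [hM, skewRankOne_self])
    _ = ‖∑ i ∈ s, rankOne 𝕜 (e (x i)) (e (x (i + 1))) -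
          ∑ i ∈ s, rankOne 𝕜 (e (x (i + 1))) (e (x i))‖ := by
        simp only [skewRankOne, Finset.sum_sub_distrib]
    _ ≤ 1 + 1 := norm_sub_le_of_le (norm_sum_rankOne_le_one hs ht s)
        (norm_sum_rankOne_le_one ht hs s)
    _ = 2 := one_add_one_eq_two

end SkewRankOne

section TriangularRep

variable {𝕜 G H : Type*} [Group G] [RCLike 𝕜] [NormedAddCommGroup H]
  [InnerProductSpace 𝕜 H]

/-- The action of the dual number `a + b ε` on `H ⊕ H` by the operator matrix `[[a, b], [0, a]]`. -/
noncomputable def blockTriangular :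
    (H →L[𝕜] H)[ε] →* (WithLp 2 (H × H) →L[𝕜] WithLp 2 (H × H)) where
  toFun a := (WithLp.prodContinuousLinearEquiv 2 𝕜 H H).symm ∘L
    ((a.fst ∘L WithLp.fstL 2 𝕜 H H + a.snd ∘L WithLp.sndL 2 𝕜 H H).prod
      (a.fst ∘L WithLp.sndL 2 𝕜 H H))
  map_one' := ContinuousLinearMap.ext fun z => WithLp.ofLp_injective 2 (by simp [Prod.ext_iff])
  map_mul' a b := by ext; simp [add_assoc]

@[simp]
theorem blockTriangular_apply (a : (H →L[𝕜] H)[ε]) (z : WithLp 2 (H × H)) :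
    blockTriangular a z = WithLp.toLp 2 (a.fst z.fst + a.snd z.snd, a.fst z.snd) :=
  rfl

theorem norm_blockTriangular_le (a : (H →L[𝕜] H)[ε]) :
    ‖blockTriangular a‖ ≤ 2 * ‖a.fst‖ + ‖a.snd‖ := by
  refine ContinuousLinearMap.opNorm_le_bound _ (by positivity) fun z => ?_
  have hfst : ‖z.fst‖ ≤ ‖z‖ := WithLp.norm_fst_le _ z
  have hsnd : ‖z.snd‖ ≤ ‖z‖ := WithLp.norm_snd_le _ z
  have hsplit (x y : H) : ‖WithLp.toLp 2 (x, y)‖ ≤ ‖x‖ + ‖y‖ := by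
    have := norm_add_le (WithLp.toLp 2 (x, (0 : H))) (WithLp.toLp 2 ((0 : H), y))
    simpa [← WithLp.toLp_add] using this
  calc ‖blockTriangular a z‖
      ≤ ‖a.fst z.fst + a.snd z.snd‖ + ‖a.fst z.snd‖ := hsplit _ _
    _ ≤ (‖a.fst‖ * ‖z‖ + ‖a.snd‖ * ‖z‖) + ‖a.fst‖ * ‖z‖ :=
        add_le_add (norm_add_le_of_le (a.fst.le_opNorm_of_le hfst) (a.snd.le_opNorm_of_le hsnd))
          (a.fst.le_opNorm_of_le hsnd)
    _ = (2 * ‖a.fst‖ + ‖a.snd‖) * ‖z‖ := by ring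

/-- The representation on `H ⊕ H` by block triangular matrices given by a homomorphism into the
invertible dual numbers over the operators on `H`. -/
noncomputable def triangularRep (ρ : G →* ((H →L[𝕜] H)[ε])ˣ) :
    G →* (WithLp 2 (H × H) ≃L[𝕜] WithLp 2 (H × H)) :=
  (ContinuousLinearEquiv.unitsEquiv 𝕜 _).toMonoidHom.comp ((Units.map blockTriangular).comp ρ)

theorem triangularRep_apply (ρ : G →* ((H →L[𝕜] H)[ε])ˣ) (g : G) (z : WithLp 2 (H × H)) :
    triangularRep ρ g z = blockTriangular (ρ g : (H →L[𝕜] H)[ε]) z :=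
  rfl

end TriangularRep

section Unitarizable

variable {G H E : Type*} [Group G] [NormedAddCommGroup H] [InnerProductSpace ℂ H]
  [NormedAddCommGroup E] [InnerProductSpace ℂ E]

theorem uniformlyBoundedRep_triangularRep {ρ : G →* ((H →L[ℂ] H)[ε])ˣ} {C D : ℝ}
    (hfst : ∀ g, ‖(ρ g : (H →L[ℂ] H)[ε]).fst‖ ≤ C)
    (hsnd : ∀ g, ‖(ρ g : (H →L[ℂ] H)[ε]).snd‖ ≤ D) : UniformlyBoundedRep (triangularRep ρ) :=
  ⟨2 * C + D, fun g => (norm_blockTriangular_le (ρ g : (H →L[ℂ] H)[ε])).trans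
    (by linarith [hfst g, hsnd g])⟩

theorem IsUnitarizableRep.exists_invariant_projection [CompleteSpace E] {π : G →* (E ≃L[ℂ] E)}
    (hπ : IsUnitarizableRep π) {K : Submodule ℂ E} (hK : IsClosed (K : Set E))
    (hinv : ∀ g, ∀ x ∈ K, π g x ∈ K) :
    ∃ P : E →L[ℂ] E, (∀ x, P x ∈ K) ∧ (∀ x ∈ K, P x = x) ∧ ∀ g x, P (π g x) = π g (P x) := by
  obtain ⟨S, hS⟩ := hπ
  let U (g : G) : E ≃ₗᵢ[ℂ] E := ⟨(S.trans ((π g).trans S.symm)).toLinearEquiv, hS g⟩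
  have hU (g : G) (x : E) : S (U g x) = π g (S x) := S.apply_symm_apply _
  let L : Submodule ℂ E := K.comap S.toLinearMap
  have : CompleteSpace L := (hK.preimage S.continuous).completeSpace_coe
  have hUL (g : G) {x : E} (hx : x ∈ L) : U g x ∈ L := by
    change S (U g x) ∈ K
    exact hU g x ▸ hinv g _ hx
  have hmap (g : G) : L.map ((U g).toLinearEquiv : E →ₗ[ℂ] E) = L := by
    refine le_antisymm (map_le_iff_le_comap.2 fun x hx => hUL g hx) fun x hx =>
      ⟨U g⁻¹ x, hUL g⁻¹ hx, S.injective ?_⟩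
    change S (U g (U g⁻¹ x)) = S x
    rw [hU, hU, map_inv]
    exact (π g).apply_symm_apply _
  have hcomm (g : G) (x : E) : L.starProjection (U g x) = U g (L.starProjection x) := by
    simpa only [hmap, LinearIsometryEquiv.symm_apply_apply] using
      starProjection_map_apply (U g) L (U g x)
  refine ⟨S ∘L L.starProjection ∘L S.symm, fun x => L.starProjection_apply_mem _,
    fun x hx => ?_, fun g x => ?_⟩
  · have hSx : S.symm x ∈ L := by simpa [L] using hx
    simp [starProjection_eq_self_iff.2 hSx]
  · have := congrArg S (hcomm g (S.symm x))
    rw [hU] at this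
    simpa [U] using this

theorem IsUnitarizableRep.exists_snd_eq_commutator [CompleteSpace H] {ρ : G →* ((H →L[ℂ] H)[ε])ˣ}
    (hρ : IsUnitarizableRep (triangularRep ρ)) :
    ∃ T : H →L[ℂ] H, ∀ g, (ρ g : (H →L[ℂ] H)[ε]).snd =
      (ρ g : (H →L[ℂ] H)[ε]).fst * T - T * (ρ g : (H →L[ℂ] H)[ε]).fst := by
  obtain ⟨P, hPmem, hPid, hPcomm⟩ := hρ.exists_invariant_projection
    (WithLp.sndL 2 ℂ H H).isClosed_ker fun g z hz => by
      simpa [triangularRep_apply] using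
        congrArg (ρ g : (H →L[ℂ] H)[ε]).fst (LinearMap.mem_ker.1 hz)
  let T : H →L[ℂ] H := WithLp.fstL 2 ℂ H H ∘L P ∘L
    (WithLp.prodContinuousLinearEquiv 2 ℂ H H).symm ∘L .inr ℂ H H
  have hP (x y : H) : P (WithLp.toLp 2 (x, y)) = WithLp.toLp 2 (x + T y, 0) := by
    have hx : P (WithLp.toLp 2 (x, 0)) = WithLp.toLp 2 (x, 0) := hPid _ (by simp)
    have hy : P (WithLp.toLp 2 (0, y)) = WithLp.toLp 2 (T y, 0) :=
      WithLp.ofLp_injective 2 (Prod.ext rfl (hPmem _))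
    calc P (WithLp.toLp 2 (x, y)) = P (WithLp.toLp 2 (x, 0) + WithLp.toLp 2 (0, y)) := by
          simp [← WithLp.toLp_add]
      _ = WithLp.toLp 2 (x + T y, 0) := by
          rw [map_add, hx, hy, ← WithLp.toLp_add, Prod.mk_add_mk, add_zero]
  refine ⟨T, fun g => ContinuousLinearMap.ext fun y => eq_sub_of_add_eq ?_⟩
  have := congrArg WithLp.fst (hPcomm g (WithLp.toLp 2 (0, y)))
  simpa [triangularRep_apply, hP] using this

end Unitarizable

section Deformation

variable {𝕜 G H : Type*} [RCLike 𝕜] [NormedAddCommGroup H] [InnerProductSpace 𝕜 H]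
  [CompleteSpace H] [Group G]

/-- The unit `(1 + skewRankOne ξ (u g ξ) ε) u g` of the dual numbers over the operators, a
first-order deformation of `u g`. -/
noncomputable def deformedUnit (u : G →* unitary (H →L[𝕜] H)) (ξ : H) (g : G) :
    ((H →L[𝕜] H)[ε])ˣ :=
  let val (g : G) : (H →L[𝕜] H)[ε] :=
    .inl ↑(u g) + .inr (skewRankOne 𝕜 ξ ((u g : H →L[𝕜] H) ξ) * (u g : H →L[𝕜] H))
  have val_mul_val_inv (g : G) : val g * val g⁻¹ = 1 := by
    have hinv : (u g : H →L[𝕜] H) * (u g⁻¹ : H →L[𝕜] H) = 1 := by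
      rw [← Submonoid.coe_mul, ← map_mul, mul_inv_cancel, map_one, Submonoid.coe_one]
    have hξ : (u g : H →L[𝕜] H) ((u g⁻¹ : H →L[𝕜] H) ξ) = ξ := DFunLike.congr_fun hinv ξ
    refine TrivSqZeroExt.ext (by simpa [val] using hinv) ?_
    calc (val g * val g⁻¹).snd
        = (u g * skewRankOne 𝕜 ξ ((u g⁻¹ : H →L[𝕜] H) ξ)) * (u g⁻¹ : H →L[𝕜] H) +
            skewRankOne 𝕜 ξ ((u g : H →L[𝕜] H) ξ) * (u g * (u g⁻¹ : H →L[𝕜] H)) := by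
          simp [val, mul_assoc]
      _ = skewRankOne 𝕜 ((u g : H →L[𝕜] H) ξ) ξ + skewRankOne 𝕜 ξ ((u g : H →L[𝕜] H) ξ) := by
          rw [mul_skewRankOne, mul_assoc, hinv, mul_one, mul_one, hξ]
      _ = 0 := by rw [← neg_skewRankOne, neg_add_cancel]
  ⟨val g, val g⁻¹, val_mul_val_inv g, by simpa using val_mul_val_inv g⁻¹⟩

theorem fst_deformedUnit (u : G →* unitary (H →L[𝕜] H)) (ξ : H) (g : G) :
    (deformedUnit u ξ g : (H →L[𝕜] H)[ε]).fst = u g := by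
  simp [deformedUnit]

theorem snd_deformedUnit (u : G →* unitary (H →L[𝕜] H)) (ξ : H) (g : G) :
    (deformedUnit u ξ g : (H →L[𝕜] H)[ε]).snd =
      skewRankOne 𝕜 ξ ((u g : H →L[𝕜] H) ξ) * (u g : H →L[𝕜] H) := by
  simp [deformedUnit]

theorem deformedUnit_one (u : G →* unitary (H →L[𝕜] H)) (ξ : H) : deformedUnit u ξ 1 = 1 := by
  ext1
  simp [deformedUnit]

theorem deformedUnit_inv (u : G →* unitary (H →L[𝕜] H)) (ξ : H) (g : G) :
    deformedUnit u ξ g⁻¹ = (deformedUnit u ξ g)⁻¹ :=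
  Units.ext rfl

end Deformation

section FreeGroupDeformation

variable {𝕜 α H : Type*} [RCLike 𝕜] [NormedAddCommGroup H] [InnerProductSpace 𝕜 H]
  [CompleteSpace H]

/-- The representation of a free group in the dual numbers over the operators that agrees with
`deformedUnit u ξ` on the generators. -/
noncomputable def freeDeformation (u : FreeGroup α →* unitary (H →L[𝕜] H)) (ξ : H) :
    FreeGroup α →* ((H →L[𝕜] H)[ε])ˣ :=
  FreeGroup.lift fun a => deformedUnit u ξ (.of a)

variable (u : FreeGroup α →* unitary (H →L[𝕜] H)) (ξ : H)

theorem fst_freeDeformation (g : FreeGroup α) :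
    (freeDeformation u ξ g : (H →L[𝕜] H)[ε]).fst = u g := by
  induction g using FreeGroup.induction_on with
  | C1 => simp
  | of a => simp [freeDeformation, fst_deformedUnit]
  | inv_of a _ => simp [freeDeformation, ← deformedUnit_inv, fst_deformedUnit]
  | mul g h hg hh => simp [hg, hh]

theorem freeDeformation_mk_toList (s : Option (α × Bool)) :
    freeDeformation u ξ (.mk s.toList) = deformedUnit u ξ (.mk s.toList) := by
  rcases s with _ | ⟨a, _ | _⟩
  · simp [← FreeGroup.one_eq_mk, deformedUnit_one]
  · have : FreeGroup.mk [(a, false)] = (FreeGroup.of a)⁻¹ := rfl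
    simp [this, deformedUnit_inv, freeDeformation]
  · exact FreeGroup.lift_apply_of

theorem snd_freeDeformation_mk_take (L : List (α × Bool)) (n : ℕ) :
    (freeDeformation u ξ (.mk (L.take n)) : (H →L[𝕜] H)[ε]).snd =
      (∑ i ∈ Finset.range n, skewRankOne 𝕜 ((u (.mk (L.take i)) : H →L[𝕜] H) ξ)
        ((u (.mk (L.take (i + 1))) : H →L[𝕜] H) ξ)) * (u (.mk (L.take n)) : H →L[𝕜] H) := by
  induction n with
  | zero => simp [← FreeGroup.one_eq_mk]
  | succ n ih =>
    have hstep : FreeGroup.mk (L.take (n + 1)) = .mk (L.take n) * .mk L[n]?.toList := by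
      rw [List.take_add_one, FreeGroup.mul_mk]
    rw [Finset.sum_range_succ, hstep, map_mul, Units.val_mul, DualNumber.snd_mul, ih,
      fst_freeDeformation, freeDeformation_mk_toList, snd_deformedUnit, fst_deformedUnit,
      ← mul_assoc, mul_skewRankOne, add_comm, add_mul, map_mul, Submonoid.coe_mul]
    simp only [mul_assoc, mul_apply_eq_comp]

end FreeGroupDeformation

section NonUnitarizability

variable {α : Type*} {H : Type*} [NormedAddCommGroup H] [InnerProductSpace ℂ H] [CompleteSpace H]

theorem not_isUnitarizableRep_triangularRep_freeDeformation
    {u : FreeGroup α →* unitary (H →L[ℂ] H)} {ξ : H} {t a : α}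
    (ht : (u (.of t) : H →L[ℂ] H) ξ = ξ)
    (ha : Orthonormal ℂ fun n : ℕ => (u (.of t ^ n * .of a) : H →L[ℂ] H) ξ)
    (ha' : Orthonormal ℂ fun n : ℕ => (u (.of t ^ n * (.of a)⁻¹) : H →L[ℂ] H) ξ) :
    ¬ IsUnitarizableRep (triangularRep (freeDeformation u ξ)) := by
  intro h
  obtain ⟨T, hcommutator⟩ := h.exists_snd_eq_commutator
  simp only [map_mul, map_pow, Submonoid.coe_mul, mul_apply_eq_comp] at ha ha'
  have hT (b : α) : skewRankOne ℂ ξ ((u (.of b) : H →L[ℂ] H) ξ) * (u (.of b) : H →L[ℂ] H) =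
      (u (.of b) : H →L[ℂ] H) * T - T * (u (.of b) : H →L[ℂ] H) := by
    rw [← snd_deformedUnit, ← fst_freeDeformation u ξ, ← hcommutator, freeDeformation,
      FreeGroup.lift_apply_of]
  have hcomm : Commute (u (.of t) : H →L[ℂ] H) T := by
    refine sub_eq_zero.1 ?_
    rw [← hT t, ht, skewRankOne_self, zero_mul]
  have hξT : (u (.of t) : H →L[ℂ] H) (T ξ) = T ξ := by
    rw [← mul_apply_eq_comp, hcomm, mul_apply_eq_comp, ht]
  have hinner_uT : inner ℂ ξ ((u (.of a) : H →L[ℂ] H) (T ξ)) = 0 := by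
    have hinv : (u (.of a) : H →L[ℂ] H) ((u (.of a)⁻¹ : H →L[ℂ] H) ξ) = ξ := by
      rw [← mul_apply_eq_comp, ← Submonoid.coe_mul, ← map_mul, mul_inv_cancel, map_one]
      rfl
    calc inner ℂ ξ ((u (.of a) : H →L[ℂ] H) (T ξ))
        = inner ℂ ((u (.of a) : H →L[ℂ] H) ((u (.of a)⁻¹ : H →L[ℂ] H) ξ))
            ((u (.of a) : H →L[ℂ] H) (T ξ)) := by rw [hinv]
      _ = inner ℂ ((u (.of a)⁻¹ : H →L[ℂ] H) ξ) (T ξ) := Unitary.inner_map_map _ _ _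
      _ = 0 := inner_eq_zero_of_orthonormal_orbit ha' hξT
  have hinner_Tu : inner ℂ ξ (T ((u (.of a) : H →L[ℂ] H) ξ)) = 0 := by
    rw [← ContinuousLinearMap.adjoint_inner_left, inner_eq_zero_symm]
    exact inner_eq_zero_of_orthonormal_orbit ha (unitary_adjoint_apply_eq_of_commute hcomm ht)
  have hinner_u : inner ℂ ξ ((u (.of a) : H →L[ℂ] H) ξ) = 0 :=
    inner_eq_zero_symm.1 (inner_eq_zero_of_orthonormal_orbit ha ht)
  have hnorm : ‖ξ‖ = 1 := by simpa [Unitary.norm_map] using ha.norm_eq_one 0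
  have hξ := congrArg (inner ℂ ξ) (DFunLike.congr_fun (hT a) ξ)
  rw [mul_apply_eq_comp, skewRankOne_apply, sub_apply, mul_apply_eq_comp, mul_apply_eq_comp,
    inner_sub_right, inner_sub_right, hinner_uT, hinner_Tu, hinner_u, zero_smul, inner_zero_right,
    Unitary.inner_map_map, inner_smul_right, inner_self_eq_norm_sq_to_K, hnorm] at hξ
  norm_num at hξ

end NonUnitarizability

section PermutationRep

variable {𝕜 G H V : Type*} [RCLike 𝕜] [NormedAddCommGroup H] [InnerProductSpace 𝕜 H]

theorem continuousLinearMap_ext_hilbertBasis (b : HilbertBasis V 𝕜 H) {S T : H →L[𝕜] H}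
    (h : ∀ v, S (b v) = T (b v)) : S = T :=
  ContinuousLinearMap.ext_on (dense_iff_topologicalClosure_eq_top.2 b.dense_span)
    (Set.forall_mem_range.2 h)

variable [CompleteSpace H]

/-- The unitary operator permuting the vectors of a Hilbert basis by `σ`. -/
noncomputable def basisPermutation (b : HilbertBasis V 𝕜 H) (σ : Equiv.Perm V) :
    unitary (H →L[𝕜] H) :=
  Unitary.linearIsometryEquiv.symm <| b.repr.trans
    (HilbertBasis.mk (b.orthonormal.comp σ σ.injective)
      (by rw [σ.surjective.range_comp, b.dense_span])).repr.symm

@[simp]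
theorem basisPermutation_apply (b : HilbertBasis V 𝕜 H) (σ : Equiv.Perm V) (v : V) :
    (basisPermutation b σ : H →L[𝕜] H) (b v) = b (σ v) := by
  classical
  simp [basisPermutation, b.repr_self]

variable (G) in
/-- The unitary representation permuting a Hilbert basis indexed by a set with a group action. -/
noncomputable def permutationRep [Group G] [MulAction G V] (b : HilbertBasis V 𝕜 H) :
    G →* unitary (H →L[𝕜] H) :=
  .mk' (fun g => basisPermutation b (MulAction.toPerm g)) fun g h => Subtype.ext <|
    continuousLinearMap_ext_hilbertBasis b fun v => by simp [mul_smul]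

@[simp]
theorem permutationRep_apply [Group G] [MulAction G V] (b : HilbertBasis V 𝕜 H) (g : G) (v : V) :
    (permutationRep G b g : H →L[𝕜] H) (b v) = b (g • v) :=
  basisPermutation_apply b (MulAction.toPerm g) v

end PermutationRep

section Words

open FreeGroup Subgroup

variable {α : Type*}

theorem freeGroup_mk_mem_zpowers_of {t : α} {L : List (α × Bool)} (hL : ∀ s ∈ L, s.1 = t) :
    FreeGroup.mk L ∈ zpowers (of t) := by
  induction L with
  | nil => exact one_mem _
  | cons s L ih =>
    obtain ⟨hs, hL⟩ := List.forall_mem_cons.1 hL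
    have hmk : FreeGroup.mk [s] ∈ zpowers (of t) := by
      obtain ⟨_, _ | _⟩ := s <;> subst hs
      · exact inv_mem (mem_zpowers (of _))
      · exact mem_zpowers (of _)
    exact mul_mem hmk (ih hL)

theorem freeGroup_mk_mem_zpowers_of_iff {t : α} {L : List (α × Bool)} (hL : IsReduced L) :
    FreeGroup.mk L ∈ zpowers (of t) ↔ ∀ s ∈ L, s.1 = t := by
  classical
  refine ⟨fun ⟨k, hk⟩ => ?_, freeGroup_mk_mem_zpowers_of⟩
  have hword : L = (of t ^ k).toWord := by rw [← hL.reduce_eq, ← toWord_mk, ← hk]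
  obtain ⟨n, rfl | rfl⟩ := k.eq_nat_or_neg
  all_goals simp +contextual [hword, invRev]

theorem freeGroup_mk_take_inv_mul_mk_take (L : List (α × Bool)) {i j : ℕ} (hij : i ≤ j) :
    (FreeGroup.mk (L.take i))⁻¹ * .mk (L.take j) = .mk ((L.take j).drop i) := by
  have htake : L.take i ++ (L.take j).drop i = L.take j := by
    simpa [List.take_take, hij] using List.take_append_drop i (L.take j)
  rw [inv_mul_eq_iff_eq_mul, mul_mk, htake]

theorem ordConnected_preimage_mk_take {L : List (α × Bool)} (hL : IsReduced L) (t : α)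
    (v : FreeGroup α ⧸ zpowers (of t)) :
    ((fun i => (FreeGroup.mk (L.take i) : FreeGroup α ⧸ zpowers (of t))) ⁻¹' {v}).OrdConnected := by
  have hiff {i j : ℕ} (hij : i ≤ j) :
      (FreeGroup.mk (L.take i) : FreeGroup α ⧸ zpowers (of t)) = FreeGroup.mk (L.take j) ↔
        ∀ s ∈ (L.take j).drop i, s.1 = t := by
    rw [QuotientGroup.eq, freeGroup_mk_take_inv_mul_mk_take L hij, freeGroup_mk_mem_zpowers_of_iff]
    exact hL.infix <| (List.drop_suffix _ _).isInfix.trans (List.take_prefix _ _).isInfix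
  refine ⟨fun i hi j hj k ⟨hik, hkj⟩ => ?_⟩
  rw [Set.mem_preimage, Set.mem_singleton_iff] at hi hj ⊢
  rw [← hi, eq_comm, hiff hik]
  intro s hs
  refine (hiff (hik.trans hkj)).1 (hi.trans hj.symm) s ?_
  exact ((List.take_prefix_take_left hkj).drop i).subset hs

theorem injective_pow_mul_mk_singleton {t : α} {s : α × Bool} (hs : s.1 ≠ t) :
    Function.Injective fun n : ℕ =>
      ((of t ^ n * .mk [s] : FreeGroup α) : FreeGroup α ⧸ zpowers (of t)) := by
  refine .of_lt_imp_ne fun i j hij h => ?_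
  obtain ⟨k, rfl⟩ := Nat.exists_eq_add_of_lt hij
  have hpow : of t ^ (k + 1) = .mk (List.replicate (k + 1) (t, true)) :=
    (pow_mk (k + 1)).trans (by simp)
  have hword : (of t ^ i * FreeGroup.mk [s])⁻¹ * (of t ^ (i + k + 1) * .mk [s]) =
      .mk ((s.1, !s.2) :: (List.replicate (k + 1) (t, true) ++ [s])) :=
    calc (of t ^ i * FreeGroup.mk [s])⁻¹ * (of t ^ (i + k + 1) * .mk [s])
        = (.mk [s])⁻¹ * (of t ^ (k + 1) * .mk [s]) := by group
      _ = .mk ((s.1, !s.2) :: (List.replicate (k + 1) (t, true) ++ [s])) := by rw [hpow]; rfl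
  have hred : IsReduced ((s.1, !s.2) :: (List.replicate (k + 1) (t, true) ++ [s])) := by
    rw [List.replicate_succ, List.cons_append, isReduced_cons_cons, ← List.cons_append,
      ← List.replicate_succ]
    exact ⟨fun h => absurd h hs, List.isChain_append.2
      ⟨List.isChain_replicate_of_rel _ fun _ => rfl, List.isChain_singleton _, by
        simp [List.getLast?_replicate, hs.symm]⟩⟩
  rw [QuotientGroup.eq, hword, freeGroup_mk_mem_zpowers_of_iff hred] at h
  exact hs (h (s.1, !s.2) List.mem_cons_self)

end Words

section BassSerre

open Subgroup

variable {α 𝕜 H : Type*} [RCLike 𝕜] [NormedAddCommGroup H] [InnerProductSpace 𝕜 H]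
  [CompleteSpace H]

theorem norm_snd_freeDeformation_permutationRep_le {t : α}
    (b : HilbertBasis (FreeGroup α ⧸ zpowers (FreeGroup.of t)) 𝕜 H) (g : FreeGroup α) :
    ‖(freeDeformation (permutationRep (FreeGroup α) b) (b (1 : FreeGroup α)) g :
      (H →L[𝕜] H)[ε]).snd‖ ≤ 2 := by
  classical
  have hpath := snd_freeDeformation_mk_take (permutationRep (FreeGroup α) b)
    (b (1 : FreeGroup α)) g.toWord g.toWord.length
  rw [List.take_length, FreeGroup.mk_toWord] at hpath
  simp only [hpath, CStarRing.norm_mul_coe_unitary, permutationRep_apply,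
    MulAction.Quotient.smul_coe, smul_eq_mul, mul_one]
  exact norm_sum_skewRankOne_le_two b.orthonormal
    (ordConnected_preimage_mk_take FreeGroup.isReduced_toWord t) _

theorem orthonormal_orbit_permutationRep {t : α} {s : α × Bool} (hs : s.1 ≠ t)
    (b : HilbertBasis (FreeGroup α ⧸ zpowers (FreeGroup.of t)) 𝕜 H) :
    Orthonormal 𝕜 fun n : ℕ => (permutationRep (FreeGroup α) b (.of t ^ n * .mk [s]) : H →L[𝕜] H)
      (b (1 : FreeGroup α)) := by
  simpa only [permutationRep_apply, MulAction.Quotient.smul_coe, smul_eq_mul, mul_one,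
    Function.comp_def] using b.orthonormal.comp _ (injective_pow_mul_mk_singleton hs)

end BassSerre

section DeformedPermutationRep

open Subgroup

variable {α H : Type*} [NormedAddCommGroup H] [InnerProductSpace ℂ H] [CompleteSpace H] {t : α}
  (b : HilbertBasis (FreeGroup α ⧸ zpowers (FreeGroup.of t)) ℂ H)

theorem uniformlyBoundedRep_triangularRep_permutationRep :
    UniformlyBoundedRep
      (triangularRep (freeDeformation (permutationRep (FreeGroup α) b) (b (1 : FreeGroup α)))) := by
  refine uniformlyBoundedRep_triangularRep (C := 1) (fun g => ?_)
    (norm_snd_freeDeformation_permutationRep_le b)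
  rw [fst_freeDeformation]
  exact (Unitary.linearIsometryEquiv (permutationRep (FreeGroup α) b g)
    ).toLinearIsometry.norm_toContinuousLinearMap_le

theorem not_isUnitarizableRep_triangularRep_permutationRep [Nontrivial α] :
    ¬ IsUnitarizableRep
      (triangularRep (freeDeformation (permutationRep (FreeGroup α) b) (b (1 : FreeGroup α)))) := by
  obtain ⟨a, ha⟩ := exists_ne t
  refine not_isUnitarizableRep_triangularRep_freeDeformation (t := t) (a := a) ?_
    (orthonormal_orbit_permutationRep (s := (a, true)) ha b)
    (orthonormal_orbit_permutationRep (s := (a, false)) ha b)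
  rw [permutationRep_apply, MulAction.Quotient.smul_coe, smul_eq_mul, mul_one]
  exact congrArg b (QuotientGroup.eq.2 (by simp))

end DeformedPermutationRep

theorem freeGroup_two_not_unitarizable_general {α : Type u} [Nontrivial α] :
    ∃ (E : Type u) (_ : NormedAddCommGroup E) (_ : InnerProductSpace ℂ E)
      (_ : CompleteSpace E) (π : FreeGroup α →* (E ≃L[ℂ] E)),
      UniformlyBoundedRep π ∧ ¬ IsUnitarizableRep π := by
  obtain ⟨t⟩ : Nonempty α := inferInstance
  let V := FreeGroup α ⧸ Subgroup.zpowers (FreeGroup.of t)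
  let b : HilbertBasis V ℂ (lp (fun _ : V => ℂ) 2) := .ofRepr (.refl ℂ _)
  exact ⟨_, inferInstance, inferInstance, inferInstance, _,
    uniformlyBoundedRep_triangularRep_permutationRep b,
    not_isUnitarizableRep_triangularRep_permutationRep b⟩

/-- The free group on two generators is not unitarizable: it admits a uniformly bounded
representation on a complex Hilbert space that is not unitarizable. -/
theorem freeGroup_two_not_unitarizable :
    ∃ (E : Type) (_ : NormedAddCommGroup E) (_ : InnerProductSpace ℂ E)
      (_ : CompleteSpace E) (π : FreeGroup (Fin 2) →* (E ≃L[ℂ] E)),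
      UniformlyBoundedRep π ∧ ¬ IsUnitarizableRep π :=
  freeGroup_two_not_unitarizable_general
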